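/- Let α ∈ [0, 1/√2], set β = √(1/2 − α²), let x, z ≥ 0 with x² + z² ≤ 1, set y = √(1 − x² − z²), and let r ∈ [0,1]. Let |φ⟩⟨φ| = (I + x·X + y·Y + z·Z)/2 and F = β·I + (α − β)·|φ⟩⟨φ|, and define the 2×2 Hermitian matrix P = r·F Z F + (1−r)·Tr(F Z F)·I/2. Then the eigenvalues of P are exactly (1/4)·( (4α² − 1)·z − r·√(z² + 8α²(2α² − 1)(z² − 1)) ) and (1/4)·( (4α² − 1)·z + r·√(z² + 8α²(2α² − 1)(z² − 1)) ). -/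

import Mathlib

/-!
Write `Q = |φ⟩⟨φ|`. Its Bloch vector is a unit vector, so `Q` is idempotent with trace `1` and
determinant `0`. Hence `det F = α β` and `F² = β² I + (α² - β²) Q`, so `M = F Z F` has determinant
`-α² β²` and, by cyclicity, trace `tr (F² Z) = (α² - β²) tr (Q Z) = (α² - β²) z`. Depolarizing a
`2 × 2` matrix preserves its trace and multiplies its discriminant `tr² - 4 det` by `r²`, and the
eigenvalues are `(tr ± √discr) / 2`. For `α² + β² = 1/2`, four times the discriminant of `M` is the
radicand of the theorem.
-/

open scoped Matrix

/-- The Pauli matrix `X`. -/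
noncomputable def pauliX : Matrix (Fin 2) (Fin 2) ℂ := !![0, 1; 1, 0]
/-- The Pauli matrix `Y`. -/
noncomputable def pauliY : Matrix (Fin 2) (Fin 2) ℂ := !![0, -Complex.I; Complex.I, 0]
/-- The Pauli matrix `Z`. -/
noncomputable def pauliZ : Matrix (Fin 2) (Fin 2) ℂ := !![1, 0; 0, -1]

section Discriminant

variable {R K : Type*} [CommRing R] [Field K] [NeZero (2 : K)]

lemma det_smul_one_add_smul (c d : R) (A : Matrix (Fin 2) (Fin 2) R) :
    (c • (1 : Matrix (Fin 2) (Fin 2) R) + d • A).det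
      = c ^ 2 + c * d * A.trace + d ^ 2 * A.det := by
  simp [Matrix.det_fin_two, Matrix.trace_fin_two]
  ring

lemma discr_smul_one_add_smul (c d : R) (A : Matrix (Fin 2) (Fin 2) R) :
    (c • (1 : Matrix (Fin 2) (Fin 2) R) + d • A).discr = d ^ 2 * A.discr := by
  simp only [Matrix.discr_fin_two, det_smul_one_add_smul, Matrix.trace_add, Matrix.trace_smul,
    Matrix.trace_one, Fintype.card_fin, smul_eq_mul]
  push_cast
  ring

lemma isIdempotentElem_of_trace_eq_one_of_det_eq_zero {A : Matrix (Fin 2) (Fin 2) R}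
    (htr : A.trace = 1) (hdet : A.det = 0) : IsIdempotentElem A := by
  nontriviality R
  have cayley_hamilton := A.aeval_self_charpoly
  simpa [IsIdempotentElem, Matrix.charpoly_fin_two, htr, hdet, sub_eq_zero, sq]
    using cayley_hamilton

lemma charpoly_eq_of_sq_eq_discr {A : Matrix (Fin 2) (Fin 2) K} {s : K} (hs : s ^ 2 = A.discr) :
    A.charpoly = (Polynomial.X - Polynomial.C ((A.trace - s) / 2))
      * (Polynomial.X - Polynomial.C ((A.trace + s) / 2)) := by
  have trace_eq : A.trace = (A.trace - s) / 2 + (A.trace + s) / 2 := by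
    field_simp
    ring
  have det_eq : A.det = (A.trace - s) / 2 * ((A.trace + s) / 2) := by
    rw [Matrix.discr_fin_two] at hs
    field_simp
    linear_combination hs
  rw [Matrix.charpoly_fin_two, det_eq]
  nth_rw 1 [trace_eq]
  rw [Polynomial.C_add, Polynomial.C_mul]
  ring

end Discriminant

section Depolarize

variable {K : Type*} [Field K]

/-- The depolarizing channel on `2 × 2` matrices: it mixes `M`, with weight `r`, and the multiple
of the identity that has the same trace as `M` (if `2 ≠ 0` in `K`), with weight `1 - r`. -/
def depolarize (r : K) (M : Matrix (Fin 2) (Fin 2) K) : Matrix (Fin 2) (Fin 2) K :=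
  r • M + ((1 - r) * (M.trace / 2)) • (1 : Matrix (Fin 2) (Fin 2) K)

lemma discr_depolarize (r : K) (M : Matrix (Fin 2) (Fin 2) K) :
    (depolarize r M).discr = r ^ 2 * M.discr := by
  rw [depolarize, add_comm, discr_smul_one_add_smul]

variable [NeZero (2 : K)]

lemma trace_depolarize (r : K) (M : Matrix (Fin 2) (Fin 2) K) :
    (depolarize r M).trace = M.trace := by
  simp only [depolarize, Matrix.trace_add, Matrix.trace_smul, Matrix.trace_one, Fintype.card_fin,
    smul_eq_mul, Nat.cast_ofNat]
  field_simp
  ring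

lemma charpoly_depolarize {s : K} {M : Matrix (Fin 2) (Fin 2) K} (hs : s ^ 2 = M.discr) (r : K) :
    (depolarize r M).charpoly = (Polynomial.X - Polynomial.C ((M.trace - r * s) / 2))
      * (Polynomial.X - Polynomial.C ((M.trace + r * s) / 2)) := by
  have sq_eq_discr : (r * s) ^ 2 = (depolarize r M).discr := by rw [mul_pow, hs, discr_depolarize]
  rw [charpoly_eq_of_sq_eq_discr sq_eq_discr, trace_depolarize]

end Depolarize

section TwoLevel

variable {R A n : Type*} [CommRing R] [Ring A] [Algebra R A] [Fintype n] [DecidableEq n]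

/-- The operator `b + (a - b) e`, which for an idempotent `e` acts as `a` on the range of `e` and
as `b` on its kernel. With `e = |φ⟩⟨φ|` it is the operator `F` of the theorem. -/
def twoLevel (a b : R) (e : A) : A :=
  b • (1 : A) + (a - b) • e

lemma twoLevel_mul_self {e : A} (he : IsIdempotentElem e) (a b : R) :
    twoLevel a b e * twoLevel a b e = twoLevel (a ^ 2) (b ^ 2) e := by
  simp only [twoLevel, add_mul, mul_add, smul_mul_smul_comm, one_mul, mul_one, he.eq]
  module

lemma trace_twoLevel_mul_mul_twoLevel {Q : Matrix n n R} (hQ : IsIdempotentElem Q) (a b : R)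
    (M : Matrix n n R) :
    (twoLevel a b Q * M * twoLevel a b Q).trace
      = b ^ 2 * M.trace + (a ^ 2 - b ^ 2) * (Q * M).trace := by
  rw [Matrix.trace_mul_cycle, twoLevel_mul_self hQ]
  simp [twoLevel, add_mul]

lemma det_twoLevel {Q : Matrix (Fin 2) (Fin 2) R} (htr : Q.trace = 1) (hdet : Q.det = 0)
    (a b : R) : (twoLevel a b Q).det = a * b := by
  rw [twoLevel, det_smul_one_add_smul, htr, hdet]
  ring

end TwoLevel

section Bloch

/-- The matrix `(I + x X + y Y + z Z) / 2` with Bloch vector `(x, y, z)`; for a real unit vector it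
is the pure state `|φ⟩⟨φ|`. Complex coordinates are allowed, so a real Bloch vector is cast. -/
noncomputable def blochMatrix (x y z : ℂ) : Matrix (Fin 2) (Fin 2) ℂ :=
  ((1 : ℂ) / 2) • ((1 : Matrix (Fin 2) (Fin 2) ℂ) + x • pauliX + y • pauliY + z • pauliZ)

lemma blochMatrix_eq (x y z : ℂ) :
    blochMatrix x y z =
      !![(1 + z) / 2, (x - y * Complex.I) / 2; (x + y * Complex.I) / 2, (1 - z) / 2] := by
  ext i j
  fin_cases i <;> fin_cases j <;> simp [blochMatrix, pauliX, pauliY, pauliZ] <;> ring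

lemma trace_blochMatrix (x y z : ℂ) : (blochMatrix x y z).trace = 1 := by
  rw [blochMatrix_eq, Matrix.trace_fin_two_of]
  ring

lemma det_blochMatrix (x y z : ℂ) :
    (blochMatrix x y z).det = (1 - (x ^ 2 + y ^ 2 + z ^ 2)) / 4 := by
  rw [blochMatrix_eq, Matrix.det_fin_two_of]
  linear_combination y ^ 2 / 4 * Complex.I_sq

lemma det_blochMatrix_eq_zero {x y z : ℂ} (h : x ^ 2 + y ^ 2 + z ^ 2 = 1) :
    (blochMatrix x y z).det = 0 := by
  rw [det_blochMatrix, h, sub_self, zero_div]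

lemma isIdempotentElem_blochMatrix {x y z : ℂ} (h : x ^ 2 + y ^ 2 + z ^ 2 = 1) :
    IsIdempotentElem (blochMatrix x y z) :=
  isIdempotentElem_of_trace_eq_one_of_det_eq_zero (trace_blochMatrix x y z)
    (det_blochMatrix_eq_zero h)

lemma trace_pauliZ : pauliZ.trace = 0 := by
  simp [pauliZ]

lemma det_pauliZ : pauliZ.det = -1 := by
  simp [pauliZ]

lemma trace_blochMatrix_mul_pauliZ (x y z : ℂ) : (blochMatrix x y z * pauliZ).trace = z := by
  rw [blochMatrix_eq, pauliZ, Matrix.mul_fin_two, Matrix.trace_fin_two_of]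
  ring

lemma trace_twoLevel_mul_pauliZ_mul_twoLevel {x y z : ℂ} (h : x ^ 2 + y ^ 2 + z ^ 2 = 1)
    (a b : ℂ) :
    (twoLevel a b (blochMatrix x y z) * pauliZ * twoLevel a b (blochMatrix x y z)).trace
      = (a ^ 2 - b ^ 2) * z := by
  rw [trace_twoLevel_mul_mul_twoLevel (isIdempotentElem_blochMatrix h), trace_pauliZ,
    trace_blochMatrix_mul_pauliZ, mul_zero, zero_add]

lemma discr_twoLevel_mul_pauliZ_mul_twoLevel {x y z : ℂ} (h : x ^ 2 + y ^ 2 + z ^ 2 = 1)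
    (a b : ℂ) :
    (twoLevel a b (blochMatrix x y z) * pauliZ * twoLevel a b (blochMatrix x y z)).discr
      = ((a ^ 2 - b ^ 2) * z) ^ 2 + 4 * (a * b) ^ 2 := by
  rw [Matrix.discr_fin_two, trace_twoLevel_mul_pauliZ_mul_twoLevel h, Matrix.det_mul,
    Matrix.det_mul, det_pauliZ, det_twoLevel (trace_blochMatrix x y z) (det_blochMatrix_eq_zero h)]
  ring

end Bloch

lemma radicand_eq_four_mul_discr {α β : ℝ} (h : α ^ 2 + β ^ 2 = 1 / 2) (z : ℝ) :
    z ^ 2 + 8 * α ^ 2 * (2 * α ^ 2 - 1) * (z ^ 2 - 1)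
      = 4 * (((α ^ 2 - β ^ 2) * z) ^ 2 + 4 * (α * β) ^ 2) := by
  rw [mul_pow α β, eq_sub_of_add_eq' h]
  ring

lemma sq_add_sqrt_sub_sq_sq {a c : ℝ} (h : a ^ 2 ≤ c) : a ^ 2 + √(c - a ^ 2) ^ 2 = c := by
  rw [Real.sq_sqrt (sub_nonneg.mpr h), add_sub_cancel]

lemma sq_le_half_of_le_one_div_sqrt_two {a : ℝ} (ha : 0 ≤ a) (h : a ≤ 1 / √2) :
    a ^ 2 ≤ 1 / 2 := by
  simpa using pow_le_pow_left₀ ha h 2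

theorem eigenvalues_of_post_measurement_operator_general
    {α β x y z : ℝ} (hαβ : α ^ 2 + β ^ 2 = 1 / 2) (hxyz : x ^ 2 + y ^ 2 + z ^ 2 = 1) (r : ℝ) :
    let F : Matrix (Fin 2) (Fin 2) ℂ := twoLevel (α : ℂ) (β : ℂ) (blochMatrix x y z)
    let lam₁ : ℝ := (1 / 4) * ((4 * α ^ 2 - 1) * z
      - r * √(z ^ 2 + 8 * α ^ 2 * (2 * α ^ 2 - 1) * (z ^ 2 - 1)))
    let lam₂ : ℝ := (1 / 4) * ((4 * α ^ 2 - 1) * z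
      + r * √(z ^ 2 + 8 * α ^ 2 * (2 * α ^ 2 - 1) * (z ^ 2 - 1)))
    (depolarize (r : ℂ) (F * pauliZ * F)).charpoly
      = (Polynomial.X - Polynomial.C (lam₁ : ℂ)) * (Polynomial.X - Polynomial.C (lam₂ : ℂ)) := by
  intro F lam₁ lam₂
  set D : ℝ := z ^ 2 + 8 * α ^ 2 * (2 * α ^ 2 - 1) * (z ^ 2 - 1)
  have unit_bloch : (x : ℂ) ^ 2 + (y : ℂ) ^ 2 + (z : ℂ) ^ 2 = 1 := mod_cast hxyz
  have D_eq : D = 4 * (((α ^ 2 - β ^ 2) * z) ^ 2 + 4 * (α * β) ^ 2) :=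
    radicand_eq_four_mul_discr hαβ z
  have sqrt_sq : (√D / 2) ^ 2 = ((α ^ 2 - β ^ 2) * z) ^ 2 + 4 * (α * β) ^ 2 := by
    rw [div_pow, Real.sq_sqrt (by rw [D_eq]; positivity), D_eq]
    ring
  have sqrt_sq_eq_discr : ((√D / 2 : ℝ) : ℂ) ^ 2 = (F * pauliZ * F).discr := by
    rw [discr_twoLevel_mul_pauliZ_mul_twoLevel unit_bloch]
    exact_mod_cast sqrt_sq
  have trace_eq : (F * pauliZ * F).trace = (((4 * α ^ 2 - 1) * z / 2 : ℝ) : ℂ) := by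
    rw [trace_twoLevel_mul_pauliZ_mul_twoLevel unit_bloch]
    norm_cast
    linear_combination -z * hαβ
  rw [charpoly_depolarize sqrt_sq_eq_discr, trace_eq]
  congr 3 <;> push_cast [lam₁, lam₂] <;> ring

theorem eigenvalues_of_post_measurement_operator
    (α r x z : ℝ) (hα0 : 0 ≤ α) (hα : α ≤ 1 / Real.sqrt 2)
    (hr0 : 0 ≤ r) (hr1 : r ≤ 1)
    (hx0 : 0 ≤ x) (hz0 : 0 ≤ z) (hxz : x ^ 2 + z ^ 2 ≤ 1) :
    let β : ℝ := Real.sqrt (1 / 2 - α ^ 2)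
    let y : ℝ := Real.sqrt (1 - x ^ 2 - z ^ 2)
    let φφ : Matrix (Fin 2) (Fin 2) ℂ :=
      ((1 : ℂ) / 2) • ((1 : Matrix (Fin 2) (Fin 2) ℂ)
        + (x : ℂ) • pauliX + (y : ℂ) • pauliY + (z : ℂ) • pauliZ)
    let F : Matrix (Fin 2) (Fin 2) ℂ :=
      (β : ℂ) • (1 : Matrix (Fin 2) (Fin 2) ℂ) + ((α : ℂ) - (β : ℂ)) • φφ
    let P : Matrix (Fin 2) (Fin 2) ℂ :=
      (r : ℂ) • (F * pauliZ * F)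
        + (((1 : ℂ) - r) * ((F * pauliZ * F).trace / 2)) • (1 : Matrix (Fin 2) (Fin 2) ℂ)
    let lam₁ : ℝ := (1 / 4) * ((4 * α ^ 2 - 1) * z
      - r * Real.sqrt (z ^ 2 + 8 * α ^ 2 * (2 * α ^ 2 - 1) * (z ^ 2 - 1)))
    let lam₂ : ℝ := (1 / 4) * ((4 * α ^ 2 - 1) * z
      + r * Real.sqrt (z ^ 2 + 8 * α ^ 2 * (2 * α ^ 2 - 1) * (z ^ 2 - 1)))
    P.charpoly = (Polynomial.X - Polynomial.C (lam₁ : ℂ))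
      * (Polynomial.X - Polynomial.C (lam₂ : ℂ)) := by
  intro β y _ _ _ _ _
  have hαβ : α ^ 2 + β ^ 2 = 1 / 2 :=
    sq_add_sqrt_sub_sq_sq (sq_le_half_of_le_one_div_sqrt_two hα0 hα)
  have hxyz : x ^ 2 + y ^ 2 + z ^ 2 = 1 := by
    rw [Real.sq_sqrt (by linarith)]
    ring
  exact eigenvalues_of_post_measurement_operator_general hαβ hxyz r
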